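/- arXiv:2101.07108 — 2 statements merged into one kernel-verified Lean document; each statement's English description precedes it below -/
import Mathlib

section
/- Let (X_θ)_{θ∈Θ} and (Y_θ)_{θ∈Θ} be real-valued random variables on (Ω, F) such that for every θ ∈ Θ the variables X_θ and Y_θ are independent under P_θ. If (X_θ)_{θ∈Θ} is uniformly absolutely continuous with respect to Lebesgue measure, then (X_θ + Y_θ)_{θ∈Θ} is uniformly absolutely continuous with respect to Lebesgue measure. -/
open MeasureTheory ProbabilityTheory Filter
open scoped ENNReal NNReal RealInnerProductSpace

noncomputable section

/-- The family `(X_θ)` is uniformly absolutely continuous with respect to `μ`. -/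
def UnifAbsCont {Ω Θ B : Type*} [MeasurableSpace Ω] [MeasurableSpace B]
    (P : Θ → Measure Ω) (X : Θ → Ω → B) (μ : Measure B) : Prop :=
  ∀ ε : ℝ, 0 < ε → ∃ δ : ℝ, 0 < δ ∧ ∀ s : Set B, MeasurableSet s →
    μ s < ENNReal.ofReal δ → (⨆ θ, P θ (X θ ⁻¹' s)) < ENNReal.ofReal ε

/-!
Conditionally on `Y_θ = y`, independence makes `X_θ + Y_θ` a translate of `X_θ`, so the law of the
sum is a mixture of the laws of the translates `X_θ + y`. Translation invariance of the reference
measure makes the family of all these translates uniformly absolutely continuous, with constants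
that depend neither on `θ` nor on `y`, and mixing does not increase the largest probability.
-/

theorem unifAbsCont_iff_forall_le {Ω Θ B : Type*} [MeasurableSpace Ω] [MeasurableSpace B]
    {P : Θ → Measure Ω} {X : Θ → Ω → B} {μ : Measure B} :
    UnifAbsCont P X μ ↔ ∀ ε : ℝ, 0 < ε → ∃ δ : ℝ, 0 < δ ∧ ∀ s : Set B, MeasurableSet s →
      μ s < ENNReal.ofReal δ → ∀ θ, P θ (X θ ⁻¹' s) ≤ ENNReal.ofReal ε := by
  constructor
  · intro h ε hε
    obtain ⟨δ, hδ, hsmall⟩ := h ε hε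
    exact ⟨δ, hδ, fun s hs hμs => iSup_le_iff.1 (hsmall s hs hμs).le⟩
  · intro h ε hε
    obtain ⟨δ, hδ, hsmall⟩ := h (ε / 2) (half_pos hε)
    exact ⟨δ, hδ, fun s hs hμs => (iSup_le (hsmall s hs hμs)).trans_lt
      ((ENNReal.ofReal_lt_ofReal_iff hε).2 (half_lt_self hε))⟩

theorem UnifAbsCont.add_const {Ω Θ M : Type*} [MeasurableSpace Ω] [MeasurableSpace M] [Add M]
    [MeasurableAdd M] {P : Θ → Measure Ω} {X : Θ → Ω → M} {μ : Measure M}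
    [μ.IsAddRightInvariant] (h : UnifAbsCont P X μ) :
    UnifAbsCont (fun p : Θ × M => P p.1) (fun p ω => X p.1 ω + p.2) μ := by
  rw [unifAbsCont_iff_forall_le] at h ⊢
  intro ε hε
  obtain ⟨δ, hδ, hsmall⟩ := h ε hε
  refine ⟨δ, hδ, fun s hs hμs ⟨θ, y⟩ => ?_⟩
  have hμ_translate : μ ((· + y) ⁻¹' s) = μ s :=
    (measurePreserving_add_right μ y).measure_preimage hs.nullMeasurableSet
  exact hsmall _ (measurable_add_const y hs) (hμ_translate.trans_lt hμs) θ

section Convolution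

variable {M : Type*} [AddMonoid M] [MeasurableSpace M] [MeasurableAdd₂ M]

theorem conv_apply_eq_lintegral (μ ν : Measure M) [SFinite μ] [SFinite ν] {s : Set M}
    (hs : MeasurableSet s) : (μ ∗ ν) s = ∫⁻ y, μ ((· + y) ⁻¹' s) ∂ν := by
  rw [Measure.conv, Measure.map_apply measurable_add hs,
    Measure.prod_apply_symm (measurable_add hs)]
  rfl

variable {Ω : Type*} [MeasurableSpace Ω]

theorem measure_add_preimage_eq_lintegral_of_indepFun {P : Measure Ω} [IsFiniteMeasure P]
    {X Y : Ω → M} (hX : AEMeasurable X P) (hY : AEMeasurable Y P) (hXY : IndepFun X Y P)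
    {s : Set M} (hs : MeasurableSet s) :
    P ((fun ω => X ω + Y ω) ⁻¹' s) = ∫⁻ y, P ((fun ω => X ω + y) ⁻¹' s) ∂P.map Y :=
  calc P ((fun ω => X ω + Y ω) ⁻¹' s)
      = P.map (X + Y) s := (Measure.map_apply_of_aemeasurable (hX.add hY) hs).symm
    _ = (P.map X ∗ P.map Y) s := by rw [hXY.map_add_eq_map_conv_map₀ hX hY]
    _ = ∫⁻ y, P.map X ((· + y) ⁻¹' s) ∂P.map Y := conv_apply_eq_lintegral _ _ hs
    _ = ∫⁻ y, P ((fun ω => X ω + y) ⁻¹' s) ∂P.map Y :=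
      lintegral_congr fun y => Measure.map_apply_of_aemeasurable hX (measurable_add_const y hs)

theorem measure_add_preimage_le_iSup_of_indepFun {P : Measure Ω} [IsProbabilityMeasure P]
    {X Y : Ω → M} (hX : AEMeasurable X P) (hY : AEMeasurable Y P) (hXY : IndepFun X Y P)
    {s : Set M} (hs : MeasurableSet s) :
    P ((fun ω => X ω + Y ω) ⁻¹' s) ≤ ⨆ y, P ((fun ω => X ω + y) ⁻¹' s) := by
  have := Measure.isProbabilityMeasure_map hY
  rw [measure_add_preimage_eq_lintegral_of_indepFun hX hY hXY hs]
  exact lintegral_le_iSup _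

theorem unifAbsCont_add_of_indep_general {Θ : Type*} {P : Θ → Measure Ω}
    [∀ θ, IsProbabilityMeasure (P θ)] {X Y : Θ → Ω → M} {μ : Measure M} [μ.IsAddRightInvariant]
    (hX : ∀ θ, AEMeasurable (X θ) (P θ)) (hY : ∀ θ, AEMeasurable (Y θ) (P θ))
    (hindep : ∀ θ, IndepFun (X θ) (Y θ) (P θ)) (hac : UnifAbsCont P X μ) :
    UnifAbsCont P (fun θ ω => X θ ω + Y θ ω) μ := by
  intro ε hε
  obtain ⟨δ, hδ, hsmall⟩ := hac.add_const ε hε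
  refine ⟨δ, hδ, fun s hs hμs => ?_⟩
  calc ⨆ θ, P θ ((fun ω => X θ ω + Y θ ω) ⁻¹' s)
      ≤ ⨆ θ, ⨆ y, P θ ((fun ω => X θ ω + y) ⁻¹' s) :=
        iSup_mono fun θ => measure_add_preimage_le_iSup_of_indepFun (hX θ) (hY θ) (hindep θ) hs
    _ = ⨆ p : Θ × M, P p.1 ((fun ω => X p.1 ω + p.2) ⁻¹' s) := by rw [iSup_prod]
    _ < ENNReal.ofReal ε := hsmall s hs hμs

end Convolution

/-- An independent convolution preserves uniform absolute continuity with respect to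
Lebesgue measure. -/
theorem unifAbsCont_add_of_indep
    {Ω Θ : Type*} [MeasurableSpace Ω]
    (P : Θ → Measure Ω) (hP : ∀ θ, IsProbabilityMeasure (P θ))
    (X Y : Θ → Ω → ℝ) (hX : ∀ θ, Measurable (X θ)) (hY : ∀ θ, Measurable (Y θ))
    (hindep : ∀ θ, IndepFun (X θ) (Y θ) (P θ))
    (hac : UnifAbsCont P X (volume : Measure ℝ)) :
    UnifAbsCont P (fun θ ω => X θ ω + Y θ ω) (volume : Measure ℝ) :=
  unifAbsCont_add_of_indep_general (fun θ => (hX θ).aemeasurable) (fun θ => (hY θ).aemeasurable)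
    hindep hac
end
end

section
/- Let (X_{n,θ})_{n∈ℕ, θ∈Θ} and (X_θ)_{θ∈Θ} be real-valued random variables on (Ω, F), and assume that (X_θ)_{θ∈Θ} is uniformly absolutely continuous with respect to a probability measure μ on ℝ with continuous cumulative distribution function (i.e. μ has no atoms). Then (X_{n,θ}) converges uniformly in distributionover Θ to (X_θ) if and only if lim_{n→∞} sup_{x∈ℝ} sup_{θ∈Θ} |P_θ(X_{n,θ} ≤ x) − P_θ(X_θ ≤ x)| = 0. -/
open MeasureTheory ProbabilityTheory Filter
open scoped ENNReal NNReal RealInnerProductSpace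

noncomputable section

/-- Bounded-Lipschitz distance between the laws of `U` and `V` under `μ`, i.e. the supremum of
`|E f(U) - E f(V)|` over functions `f` with values in `[-1, 1]` that are `1`-Lipschitz. -/
def dBL {Ω B : Type*} [MeasurableSpace Ω] [PseudoMetricSpace B]
    (μ : Measure Ω) (U V : Ω → B) : ℝ :=
  ⨆ f : {g : B → ℝ // LipschitzWith 1 g ∧ ∀ x, |g x| ≤ 1},
    |(∫ ω, f.1 (U ω) ∂μ) - ∫ ω, f.1 (V ω) ∂μ|

/-- `(X_{n,θ})` converges uniformly in distribution over `Θ` to `(Xlim_θ)`. -/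
def TendstoUnifInDist {Ω Θ B : Type*} [MeasurableSpace Ω] [PseudoMetricSpace B]
    (P : Θ → Measure Ω) (X : ℕ → Θ → Ω → B) (Xlim : Θ → Ω → B) : Prop :=
  Filter.Tendsto (fun n => ⨆ θ, dBL (P θ) (X n θ) (Xlim θ)) Filter.atTop (nhds 0)

/-!
Let `F_U` denote the distribution function of `U`. Testing against the function of slope `-1` that
decreases from `η` at `x` to `0` at `x + η` gives `η F_U(x) ≤ η F_V(x + η) + dBL(U, V)`, so a
modulus of continuity of `F_V` turns smallness of `dBL(U, V)` into smallness of `|F_U - F_V|`.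
Conversely, cut an interval `(-R, R]` into `N` cells on which a `1`-Lipschitz `f` is nearly
constant: each cell contributes at most `2 sup |F_U - F_V|` plus the oscillation of `f`, and the
complement of `(-R, R]` is controlled by tightness. So one direction rests on uniform
equicontinuity of the limit distribution functions and the other on tightness of the limit laws;
uniform absolute continuity with respect to an atomless finite measure transfers both from that
measure to the family.
-/

section Suprema

variable {α ι κ : Type*} {l : Filter α}

lemma iSup_le_iff_of_bddAbove_of_nonneg {u : ι → ℝ} {ε : ℝ} (hu : BddAbove (Set.range u))
    (hε : 0 ≤ ε) :
    ⨆ i, u i ≤ ε ↔ ∀ i, u i ≤ ε :=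
  ⟨fun h i => (le_ciSup hu i).trans h, fun h => Real.iSup_le h hε⟩

lemma tendsto_iSup_zero_iff {u : α → ι → ℝ} (h0 : ∀ a i, 0 ≤ u a i)
    (hu : ∀ a, BddAbove (Set.range (u a))) :
    Tendsto (fun a => ⨆ i, u a i) l (nhds 0) ↔ ∀ ε > 0, ∀ᶠ a in l, ∀ i, u a i ≤ ε := by
  have hsup : ∀ a, 0 ≤ ⨆ i, u a i := fun a => Real.iSup_nonneg (h0 a)
  simp only [Metric.tendsto_nhds, Real.dist_0_eq_abs, abs_of_nonneg (hsup _)]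
  constructor <;> intro h ε hε
  · filter_upwards [h ε hε] with a ha
    exact (iSup_le_iff_of_bddAbove_of_nonneg (hu a) hε.le).1 ha.le
  · filter_upwards [h (ε / 2) (half_pos hε)] with a ha
    exact (Real.iSup_le ha (half_pos hε).le).trans_lt (half_lt_self hε)

lemma tendsto_iSup_iSup_zero_iff {u : α → ι → κ → ℝ} (h0 : ∀ a i j, 0 ≤ u a i j) {C : ℝ}
    (hC : ∀ a i j, u a i j ≤ C) :
    Tendsto (fun a => ⨆ i, ⨆ j, u a i j) l (nhds 0) ↔
      ∀ ε > 0, ∀ᶠ a in l, ∀ i j, u a i j ≤ ε := by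
  have hbdd : ∀ a i, BddAbove (Set.range (u a i)) := fun a i =>
    ⟨C, Set.forall_mem_range.2 (hC a i)⟩
  have hsup : ∀ a i, ⨆ j, u a i j ≤ max C 0 := fun a i =>
    Real.iSup_le (fun j => (hC a i j).trans (le_max_left C 0)) (le_max_right C 0)
  rw [tendsto_iSup_zero_iff (fun a i => Real.iSup_nonneg (h0 a i))
    (fun a => ⟨max C 0, Set.forall_mem_range.2 (hsup a)⟩)]
  exact forall₂_congr fun ε hε => eventually_congr <| Eventually.of_forall fun a =>
    forall_congr' fun i => iSup_le_iff_of_bddAbove_of_nonneg (hbdd a i) (le_of_lt hε)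

end Suprema

section BoundedLipschitz

lemma abs_integral_sub_integral_le {Ω : Type*} [MeasurableSpace Ω] {P : Measure Ω}
    [IsFiniteMeasure P] {g h : Ω → ℝ} {C : ℝ} (hg : ∀ ω, |g ω| ≤ C) (hh : ∀ ω, |h ω| ≤ C) :
    |(∫ ω, g ω ∂P) - ∫ ω, h ω ∂P| ≤ 2 * (C * P.real Set.univ) := by
  rw [two_mul]
  exact (norm_sub_le (∫ ω, g ω ∂P) (∫ ω, h ω ∂P)).trans <| add_le_add
    (norm_integral_le_of_norm_le_const (Eventually.of_forall hg))
    (norm_integral_le_of_norm_le_const (Eventually.of_forall hh))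

variable {Ω Θ B : Type*} [MeasurableSpace Ω] [PseudoMetricSpace B] {P : Measure Ω}
  {U V : Ω → B}

lemma dBL_nonneg : 0 ≤ dBL P U V :=
  Real.iSup_nonneg fun _ => abs_nonneg _

lemma dBL_comm : dBL P U V = dBL P V U := by
  simp only [dBL, abs_sub_comm]

lemma dBL_le {ε : ℝ} (h : ∀ f : B → ℝ, LipschitzWith 1 f → (∀ x, |f x| ≤ 1) →
    |(∫ ω, f (U ω) ∂P) - ∫ ω, f (V ω) ∂P| ≤ ε) :
    dBL P U V ≤ ε :=
  Real.iSup_le (fun f => h f.1 f.2.1 f.2.2) <| by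
    simpa using h (fun _ => 0) (LipschitzWith.const' 0) (by simp)

variable [IsFiniteMeasure P]

lemma dBL_le_two_mul_measureReal_univ : dBL P U V ≤ 2 * P.real Set.univ :=
  dBL_le fun _ _ hf => by
    simpa only [one_mul] using
      abs_integral_sub_integral_le (P := P) (fun ω => hf (U ω)) fun ω => hf (V ω)

lemma abs_integral_sub_integral_le_dBL {f : B → ℝ} (hf : LipschitzWith 1 f)
    (hf1 : ∀ x, |f x| ≤ 1) :
    |(∫ ω, f (U ω) ∂P) - ∫ ω, f (V ω) ∂P| ≤ dBL P U V :=
  le_ciSup (f := fun g : {g : B → ℝ // LipschitzWith 1 g ∧ ∀ x, |g x| ≤ 1} =>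
      |(∫ ω, g.1 (U ω) ∂P) - ∫ ω, g.1 (V ω) ∂P|)
    ⟨_, Set.forall_mem_range.2 fun g =>
      abs_integral_sub_integral_le (fun ω => g.2.2 (U ω)) fun ω => g.2.2 (V ω)⟩ ⟨f, hf, hf1⟩

lemma tendstoUnifInDist_iff {P : Θ → Measure Ω} [∀ θ, IsProbabilityMeasure (P θ)]
    {X : ℕ → Θ → Ω → B} {Xlim : Θ → Ω → B} :
    TendstoUnifInDist P X Xlim ↔
      ∀ ε > 0, ∀ᶠ n in atTop, ∀ θ, dBL (P θ) (X n θ) (Xlim θ) ≤ ε :=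
  tendsto_iSup_zero_iff (fun _ _ => dBL_nonneg) fun _ =>
    ⟨2, Set.forall_mem_range.2 fun θ => by
      simpa using dBL_le_two_mul_measureReal_univ (P := P θ)⟩

end BoundedLipschitz

section Thickening

lemma lipschitzWith_mul_thickenedIndicator {B : Type*} [PseudoMetricSpace B] (hη : 0 < η)
    (E : Set B) : LipschitzWith 1 fun x => η * (thickenedIndicator hη E x : ℝ) := by
  refine LipschitzWith.of_dist_le_mul fun x y => ?_
  have hdist := (lipschitzWith_thickenedIndicator hη E).dist_le_mul x y
  rw [NNReal.coe_inv, Real.coe_toNNReal η hη.le, inv_mul_eq_div, le_div_iff₀' hη] at hdist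
  simpa only [Real.dist_eq, ← mul_sub, abs_mul, abs_of_pos hη, NNReal.coe_one, one_mul,
    NNReal.dist_eq] using hdist

variable {Ω B : Type*} [MeasurableSpace Ω] [PseudoMetricSpace B] [MeasurableSpace B]
  [OpensMeasurableSpace B] {ν : Measure B} [IsFiniteMeasure ν] {P : Measure Ω}
  [IsFiniteMeasure P] {U V : Ω → B} {η : ℝ}

lemma measureReal_le_integral_thickenedIndicator (hη : 0 < η) {E : Set B}
    (hE : MeasurableSet E) : ν.real E ≤ ∫ x, (thickenedIndicator hη E x : ℝ) ∂ν := by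
  rw [← integral_indicator_one hE]
  refine integral_mono ((integrable_const 1).indicator hE)
    (integrable_thickenedIndicator E hη) fun x => ?_
  refine Set.indicator_le' (fun y hy => ?_) (fun y _ => NNReal.coe_nonneg _) x
  simp [thickenedIndicator_one hη E hy]

lemma integral_thickenedIndicator_le_measureReal_thickening (hη : 0 < η) (E : Set B) :
    ∫ x, (thickenedIndicator hη E x : ℝ) ∂ν ≤ ν.real (Metric.thickening η E) := by
  have hmeas : MeasurableSet (Metric.thickening η E) := Metric.isOpen_thickening.measurableSet
  rw [← integral_indicator_one hmeas]
  refine integral_mono (integrable_thickenedIndicator E hη)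
    ((integrable_const 1).indicator hmeas) fun x => ?_
  by_cases hx : x ∈ Metric.thickening η E
  · simpa [hx] using thickenedIndicator_le_one hη E x
  · simp [hx, thickenedIndicator_zero hη E hx]

lemma mul_measureReal_map_le_add_dBL (hU : AEMeasurable U P) (hV : AEMeasurable V P)
    (hη : 0 < η) (hη1 : η ≤ 1) {E : Set B} (hE : MeasurableSet E) :
    η * (P.map U).real E ≤ η * (P.map V).real (Metric.thickening η E) + dBL P U V := by
  set φ : B → ℝ := fun x => thickenedIndicator hη E x
  have hφ : LipschitzWith 1 fun x => η * φ x := lipschitzWith_mul_thickenedIndicator hη E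
  have hφ1 : ∀ x, |η * φ x| ≤ 1 := fun x => by
    rw [abs_of_nonneg (by positivity)]
    exact mul_le_one₀ hη1 (NNReal.coe_nonneg _) (thickenedIndicator_le_one hη E x)
  have hmap : ∀ {W : Ω → B}, AEMeasurable W P →
      ∫ ω, η * φ (W ω) ∂P = η * ∫ x, φ x ∂P.map W := fun hW => by
    rw [← integral_const_mul, integral_map hW hφ.continuous.aestronglyMeasurable]
  have htest := (abs_le.1 (abs_integral_sub_integral_le_dBL (P := P) (U := U) (V := V) hφ hφ1)).2
  rw [hmap hU, hmap hV] at htest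
  calc η * (P.map U).real E
      ≤ η * ∫ x, φ x ∂P.map U := by
        gcongr; exact measureReal_le_integral_thickenedIndicator hη hE
    _ ≤ η * ∫ x, φ x ∂P.map V + dBL P U V := by linarith
    _ ≤ η * (P.map V).real (Metric.thickening η E) + dBL P U V := by
        gcongr; exact integral_thickenedIndicator_le_measureReal_thickening hη E

end Thickening

section DistributionFunctions

lemma abs_cdf_sub_cdf_le_one (ν₁ ν₂ : Measure ℝ) (x : ℝ) : |cdf ν₁ x - cdf ν₂ x| ≤ 1 :=
  abs_sub_le_of_nonneg_of_le (cdf_nonneg ν₁ x) (cdf_le_one ν₁ x) (cdf_nonneg ν₂ x)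
    (cdf_le_one ν₂ x)

variable {ν : Measure ℝ} [IsProbabilityMeasure ν]

lemma measureReal_Ioc_eq_cdf_sub {a b : ℝ} (hab : a ≤ b) :
    ν.real (Set.Ioc a b) = cdf ν b - cdf ν a := by
  rw [← Set.Iic_sdiff_Iic, measureReal_sdiff (Set.Iic_subset_Iic.2 hab) measurableSet_Iic,
    cdf_eq_real, cdf_eq_real]

lemma dist_cdf_eq_measureReal_uIoc (x y : ℝ) :
    dist (cdf ν x) (cdf ν y) = ν.real (Set.uIoc x y) := by
  wlog hxy : x ≤ y generalizing x y
  · rw [dist_comm, Set.uIoc_comm, this y x (le_of_not_ge hxy)]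
  · rw [Set.uIoc_of_le hxy, measureReal_Ioc_eq_cdf_sub hxy, dist_comm, Real.dist_eq,
      abs_of_nonneg (sub_nonneg.2 (monotone_cdf ν hxy))]

lemma dist_cdf_le_measureReal_ball {x y r : ℝ} (hxy : dist x y < r) :
    dist (cdf ν x) (cdf ν y) ≤ ν.real (Metric.ball x r) := by
  rw [dist_cdf_eq_measureReal_uIoc]
  have hx : x ∈ Metric.ball x r := Metric.mem_ball_self (dist_nonneg.trans_lt hxy)
  exact measureReal_mono <| Set.uIoc_subset_uIcc.trans <|
    (convex_ball x r).ordConnected.uIcc_subset hx (Metric.mem_ball'.2 hxy)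

lemma uniformEquicontinuous_cdf {ι : Type*} {ρ : ι → Measure ℝ}
    [∀ i, IsProbabilityMeasure (ρ i)]
    (h : ∀ ε > 0, ∃ r > 0, ∀ i x, (ρ i).real (Metric.ball x r) ≤ ε) :
    UniformEquicontinuous fun i => ⇑(cdf (ρ i)) := by
  refine Metric.uniformEquicontinuous_iff.2 fun ε hε => ?_
  obtain ⟨r, hr, hball⟩ := h (ε / 2) (half_pos hε)
  refine ⟨r, hr, fun x y hxy i => ?_⟩
  exact ((dist_cdf_le_measureReal_ball hxy).trans (hball i x)).trans_lt (half_lt_self hε)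

end DistributionFunctions

section CdfOfBoundedLipschitz

variable {Ω : Type*} [MeasurableSpace Ω] {P : Measure Ω} [IsProbabilityMeasure P]
  {U V : Ω → ℝ} {η : ℝ}

lemma cdf_map_le_add_dBL_div (hU : AEMeasurable U P) (hV : AEMeasurable V P) (hη : 0 < η)
    (hη1 : η ≤ 1) (x : ℝ) :
    cdf (P.map U) x ≤ cdf (P.map V) (x + η) + dBL P U V / η := by
  have := Measure.isProbabilityMeasure_map hU
  have := Measure.isProbabilityMeasure_map hV
  have hsub : Metric.thickening η (Set.Iic x) ⊆ Set.Iic (x + η) := fun z hz => by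
    obtain ⟨y, hy, hzy⟩ := Metric.mem_thickening_iff.1 hz
    rw [Real.dist_eq, abs_lt] at hzy
    rw [Set.mem_Iic] at hy ⊢
    linarith
  rw [cdf_eq_real, cdf_eq_real, ← sub_le_iff_le_add', le_div_iff₀' hη, mul_sub,
    sub_le_iff_le_add']
  calc η * (P.map U).real (Set.Iic x)
      ≤ η * (P.map V).real (Metric.thickening η (Set.Iic x)) + dBL P U V :=
        mul_measureReal_map_le_add_dBL hU hV hη hη1 measurableSet_Iic
    _ ≤ η * (P.map V).real (Set.Iic (x + η)) + dBL P U V := by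
        gcongr; exact measure_ne_top _ _

lemma abs_cdf_map_sub_le (hU : AEMeasurable U P) (hV : AEMeasurable V P) (hη : 0 < η)
    (hη1 : η ≤ 1) {ε : ℝ} (hε : ∀ y, cdf (P.map V) (y + η) ≤ cdf (P.map V) y + ε) (x : ℝ) :
    |cdf (P.map U) x - cdf (P.map V) x| ≤ ε + dBL P U V / η := by
  have hupper := cdf_map_le_add_dBL_div hU hV hη hη1 x
  have hlower := cdf_map_le_add_dBL_div hV hU hη hη1 (x - η)
  have hε' := hε (x - η)
  rw [sub_add_cancel, dBL_comm] at hlower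
  rw [sub_add_cancel] at hε'
  rw [abs_le]
  constructor <;> linarith [hε x]

theorem TendstoUnifInDist.eventually_abs_cdf_sub_le {Θ : Type*} {P : Θ → Measure Ω}
    [∀ θ, IsProbabilityMeasure (P θ)] {X : ℕ → Θ → Ω → ℝ} {Xlim : Θ → Ω → ℝ}
    (h : TendstoUnifInDist P X Xlim) (hX : ∀ n θ, AEMeasurable (X n θ) (P θ))
    (hXlim : ∀ θ, AEMeasurable (Xlim θ) (P θ))
    (hcdf : UniformEquicontinuous fun θ => ⇑(cdf ((P θ).map (Xlim θ)))) {ε : ℝ} (hε : 0 < ε) :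
    ∀ᶠ n in atTop, ∀ x θ,
      |cdf ((P θ).map (X n θ)) x - cdf ((P θ).map (Xlim θ)) x| ≤ ε := by
  obtain ⟨δ, hδ, hmod⟩ := Metric.uniformEquicontinuous_iff.1 hcdf (ε / 2) (half_pos hε)
  obtain ⟨η, hη, hηmin⟩ := exists_between (lt_min hδ one_pos)
  obtain ⟨hηδ, hη1⟩ := lt_min_iff.1 hηmin
  have hstep : ∀ θ y,
      cdf ((P θ).map (Xlim θ)) (y + η) ≤ cdf ((P θ).map (Xlim θ)) y + ε / 2 := fun θ y => by
    have hdist := hmod (y + η) y (by simpa [abs_of_pos hη] using hηδ) θ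
    rw [Real.dist_eq] at hdist
    linarith [(abs_lt.1 hdist).2]
  filter_upwards [tendstoUnifInDist_iff.1 h (ε / 2 * η) (by positivity)] with n hn x θ
  have hdiv : dBL (P θ) (X n θ) (Xlim θ) / η ≤ ε / 2 := (div_le_iff₀ hη).2 (hn θ)
  linarith [abs_cdf_map_sub_le (hX n θ) (hXlim θ) hη hη1.le (hstep θ) x]

end CdfOfBoundedLipschitz

section BoundedLipschitzOfCdf

variable {ν ν₁ ν₂ : Measure ℝ} {f : ℝ → ℝ}

lemma abs_intervalIntegral_sub_mul_le [IsFiniteMeasureOnCompacts ν] {K : ℝ≥0}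
    (hf : LipschitzWith K f) {a b : ℝ} (hab : a ≤ b) :
    |(∫ x in a..b, f x ∂ν) - f a * ν.real (Set.Ioc a b)| ≤
      K * (b - a) * ν.real (Set.Ioc a b) := by
  have hfin : ν (Set.Ioc a b) < ∞ := measure_Ioc_lt_top
  have hsub : (∫ x in a..b, f x ∂ν) - f a * ν.real (Set.Ioc a b) =
      ∫ x in Set.Ioc a b, (f x - f a) ∂ν := by
    rw [integral_sub hf.continuous.integrableOn_Ioc (integrableOn_const hfin.ne),
      setIntegral_const, smul_eq_mul, mul_comm, intervalIntegral.integral_of_le hab]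
  rw [hsub, ← Real.norm_eq_abs]
  refine norm_setIntegral_le_of_norm_le_const hfin fun x hx => ?_
  calc ‖f x - f a‖ ≤ K * |x - a| := hf.dist_le_mul x a
    _ ≤ K * (b - a) := by
      rw [abs_of_pos (sub_pos.2 hx.1)]
      gcongr
      exact hx.2

variable [IsProbabilityMeasure ν₁] [IsProbabilityMeasure ν₂] {D : ℝ}

lemma abs_measureReal_Ioc_sub_le (hD : ∀ x, |cdf ν₁ x - cdf ν₂ x| ≤ D) {a b : ℝ}
    (hab : a ≤ b) : |ν₁.real (Set.Ioc a b) - ν₂.real (Set.Ioc a b)| ≤ 2 * D := by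
  rw [measureReal_Ioc_eq_cdf_sub hab, measureReal_Ioc_eq_cdf_sub hab, sub_sub_sub_comm, two_mul]
  exact (abs_sub _ _).trans (add_le_add (hD b) (hD a))

lemma sum_measureReal_Ioc_le_one [IsProbabilityMeasure ν] {t : ℕ → ℝ} (ht : Monotone t) (N : ℕ) :
    ∑ k ∈ Finset.range N, ν.real (Set.Ioc (t k) (t (k + 1))) ≤ 1 := by
  simp only [measureReal_Ioc_eq_cdf_sub (ht (Nat.le_succ _))]
  rw [Finset.sum_range_sub fun k => cdf ν (t k)]
  linarith [cdf_le_one ν (t N), cdf_nonneg ν (t 0)]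

lemma abs_intervalIntegral_sub_le_of_abs_cdf_sub_le (hf : LipschitzWith 1 f) (hf1 : ∀ x, |f x| ≤ 1)
    (hD : ∀ x, |cdf ν₁ x - cdf ν₂ x| ≤ D) {a b : ℝ} (hab : a ≤ b) :
    |(∫ x in a..b, f x ∂ν₁) - ∫ x in a..b, f x ∂ν₂| ≤
      (b - a) * (ν₁.real (Set.Ioc a b) + ν₂.real (Set.Ioc a b)) + 2 * D := by
  have h₁ := abs_intervalIntegral_sub_mul_le (ν := ν₁) hf hab
  have h₂ := abs_intervalIntegral_sub_mul_le (ν := ν₂) hf hab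
  have hconst : |f a * ν₁.real (Set.Ioc a b) - f a * ν₂.real (Set.Ioc a b)| ≤ 2 * D := by
    rw [← mul_sub, abs_mul]
    exact (mul_le_of_le_one_left (abs_nonneg _) (hf1 a)).trans (abs_measureReal_Ioc_sub_le hD hab)
  rw [NNReal.coe_one, one_mul] at h₁ h₂
  rw [abs_le] at *
  constructor <;> linarith

lemma abs_intervalIntegral_sub_le_of_mesh (hf : LipschitzWith 1 f) (hf1 : ∀ x, |f x| ≤ 1)
    (hD : ∀ x, |cdf ν₁ x - cdf ν₂ x| ≤ D) {t : ℕ → ℝ} (ht : Monotone t) {h : ℝ}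
    (hmesh : ∀ k, t (k + 1) - t k ≤ h) (N : ℕ) :
    |(∫ x in t 0..t N, f x ∂ν₁) - ∫ x in t 0..t N, f x ∂ν₂| ≤ 2 * h + 2 * D * N := by
  have hh : 0 ≤ h := (sub_nonneg.2 (ht (Nat.le_succ 0))).trans (hmesh 0)
  have hsplit : ∀ (ν : Measure ℝ) [IsProbabilityMeasure ν],
      ∫ x in t 0..t N, f x ∂ν = ∑ k ∈ Finset.range N, ∫ x in t k..t (k + 1), f x ∂ν :=
    fun ν _ => (intervalIntegral.sum_integral_adjacent_intervals fun _ _ =>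
      hf.continuous.intervalIntegrable _ _).symm
  rw [hsplit ν₁, hsplit ν₂, ← Finset.sum_sub_distrib]
  calc |∑ k ∈ Finset.range N,
          ((∫ x in t k..t (k + 1), f x ∂ν₁) - ∫ x in t k..t (k + 1), f x ∂ν₂)|
      ≤ ∑ k ∈ Finset.range N, (h * (ν₁.real (Set.Ioc (t k) (t (k + 1))) +
          ν₂.real (Set.Ioc (t k) (t (k + 1)))) + 2 * D) := by
        refine (Finset.abs_sum_le_sum_abs _ _).trans (Finset.sum_le_sum fun k _ => ?_)
        grw [abs_intervalIntegral_sub_le_of_abs_cdf_sub_le hf hf1 hD (ht (Nat.le_succ k)), hmesh k]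
    _ = h * (∑ k ∈ Finset.range N, ν₁.real (Set.Ioc (t k) (t (k + 1))) +
          ∑ k ∈ Finset.range N, ν₂.real (Set.Ioc (t k) (t (k + 1)))) + 2 * D * N := by
        rw [Finset.sum_add_distrib, ← Finset.mul_sum, Finset.sum_add_distrib, Finset.sum_const,
          Finset.card_range, nsmul_eq_mul, mul_comm (N : ℝ)]
    _ ≤ h * (1 + 1) + 2 * D * N := by gcongr <;> exact sum_measureReal_Ioc_le_one ht N
    _ = 2 * h + 2 * D * N := by ring

lemma abs_integral_sub_intervalIntegral_le [IsFiniteMeasure ν] (hf : Continuous f)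
    (hf1 : ∀ x, |f x| ≤ 1) {a b : ℝ} (hab : a ≤ b) :
    |(∫ x, f x ∂ν) - ∫ x in a..b, f x ∂ν| ≤ ν.real (Set.Ioc a b)ᶜ := by
  have hint : Integrable f ν :=
    Integrable.of_bound hf.aestronglyMeasurable 1 (Eventually.of_forall hf1)
  rw [intervalIntegral.integral_of_le hab, ← integral_add_compl measurableSet_Ioc hint,
    add_sub_cancel_left, ← one_mul (ν.real _), ← Real.norm_eq_abs]
  exact norm_setIntegral_le_of_norm_le_const (measure_lt_top _ _) fun x _ => hf1 x

lemma abs_integral_sub_integral_le_of_mesh (hf : LipschitzWith 1 f) (hf1 : ∀ x, |f x| ≤ 1)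
    (hD : ∀ x, |cdf ν₁ x - cdf ν₂ x| ≤ D) {t : ℕ → ℝ} (ht : Monotone t) {h : ℝ}
    (hmesh : ∀ k, t (k + 1) - t k ≤ h) (N : ℕ) :
    |(∫ x, f x ∂ν₁) - ∫ x, f x ∂ν₂| ≤
      2 * h + 2 * D * (N + 1) + 2 * ν₂.real (Set.Ioc (t 0) (t N))ᶜ := by
  have hN : t 0 ≤ t N := ht (Nat.zero_le N)
  have hcore := abs_intervalIntegral_sub_le_of_mesh hf hf1 hD ht hmesh N
  have htail₁ := abs_integral_sub_intervalIntegral_le (ν := ν₁) hf.continuous hf1 hN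
  have htail₂ := abs_integral_sub_intervalIntegral_le (ν := ν₂) hf.continuous hf1 hN
  have hcompl : ν₁.real (Set.Ioc (t 0) (t N))ᶜ ≤ ν₂.real (Set.Ioc (t 0) (t N))ᶜ + 2 * D := by
    rw [probReal_compl_eq_one_sub measurableSet_Ioc, probReal_compl_eq_one_sub measurableSet_Ioc]
    linarith [(abs_le.1 (abs_measureReal_Ioc_sub_le hD hN)).1]
  rw [abs_le] at *
  constructor <;> linarith

lemma exists_measureReal_compl_Ioc_le {S : Set (Measure ℝ)} (hS : IsTightMeasureSet S) {ε : ℝ}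
    (hε : 0 < ε) : ∃ R > 0, ∀ ν ∈ S, ν.real (Set.Ioc (-R) R)ᶜ ≤ ε := by
  obtain ⟨K, hK, hKS⟩ := isTightMeasureSet_iff_exists_isCompact_measure_compl_le.1 hS
    (ENNReal.ofReal ε) (ENNReal.ofReal_pos.2 hε)
  obtain ⟨R, hR, hKR⟩ := hK.isBounded.subset_ball_lt 0 0
  rw [Real.ball_eq_Ioo, zero_sub, zero_add] at hKR
  refine ⟨R, hR, fun ν hν => ENNReal.toReal_le_of_le_ofReal hε.le ?_⟩
  exact (measure_mono <| Set.compl_subset_compl.2 <|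
    hKR.trans Set.Ioo_subset_Ioc_self).trans (hKS ν hν)

lemma exists_abs_integral_sub_le_of_abs_cdf_sub_le {S : Set (Measure ℝ)}
    (hS : IsTightMeasureSet S) {ε : ℝ} (hε : 0 < ε) :
    ∃ D > 0, ∀ ν₁ : Measure ℝ, IsProbabilityMeasure ν₁ → ∀ ν₂ ∈ S, IsProbabilityMeasure ν₂ →
      (∀ x, |cdf ν₁ x - cdf ν₂ x| ≤ D) → ∀ f : ℝ → ℝ, LipschitzWith 1 f → (∀ x, |f x| ≤ 1) →
        |(∫ x, f x ∂ν₁) - ∫ x, f x ∂ν₂| ≤ ε := by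
  obtain ⟨R, hR, htail⟩ := exists_measureReal_compl_Ioc_le hS (ε := ε / 8) (by positivity)
  obtain ⟨N, hN⟩ := exists_nat_gt (2 * R / (ε / 8))
  have hN0 : (0 : ℝ) < N := (by positivity : 0 < 2 * R / (ε / 8)).trans hN
  set h : ℝ := 2 * R / N
  have hh : h ≤ ε / 8 := (div_lt_comm₀ (by positivity) hN0).1 hN |>.le
  set t : ℕ → ℝ := fun k => -R + k * h
  have ht : Monotone t := fun i j hij => by simp only [t]; gcongr
  have hmesh : ∀ k, t (k + 1) - t k ≤ h := fun k => by simp only [t]; push_cast; linarith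
  have ht0 : t 0 = -R := by simp [t]
  have htN : t N = R := by simp only [t, h]; field_simp; ring
  refine ⟨ε / (8 * (N + 1)), by positivity, fun ν₁ _ ν₂ hν₂ _ hD f hf hf1 => ?_⟩
  have hbound := abs_integral_sub_integral_le_of_mesh hf hf1 hD ht hmesh N
  have hDN : 2 * (ε / (8 * (N + 1))) * (N + 1) = ε / 4 := by field_simp; ring
  rw [ht0, htN, hDN] at hbound
  linarith [htail ν₂ hν₂]

theorem tendstoUnifInDist_of_eventually_abs_cdf_sub_le {Ω Θ : Type*} [MeasurableSpace Ω]
    {P : Θ → Measure Ω} [∀ θ, IsProbabilityMeasure (P θ)] {X : ℕ → Θ → Ω → ℝ}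
    {Xlim : Θ → Ω → ℝ} (hX : ∀ n θ, AEMeasurable (X n θ) (P θ))
    (hXlim : ∀ θ, AEMeasurable (Xlim θ) (P θ))
    (htight : IsTightMeasureSet (Set.range fun θ => (P θ).map (Xlim θ)))
    (h : ∀ ε > 0, ∀ᶠ n in atTop, ∀ x θ,
      |cdf ((P θ).map (X n θ)) x - cdf ((P θ).map (Xlim θ)) x| ≤ ε) :
    TendstoUnifInDist P X Xlim := by
  refine tendstoUnifInDist_iff.2 fun ε hε => ?_
  obtain ⟨D, hD, hclose⟩ := exists_abs_integral_sub_le_of_abs_cdf_sub_le htight hε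
  filter_upwards [h D hD] with n hn θ
  refine dBL_le fun f hf hf1 => ?_
  rw [← integral_map (hX n θ) hf.continuous.aestronglyMeasurable,
    ← integral_map (hXlim θ) hf.continuous.aestronglyMeasurable]
  exact hclose _ (Measure.isProbabilityMeasure_map (hX n θ)) _ ⟨θ, rfl⟩
    (Measure.isProbabilityMeasure_map (hXlim θ)) (fun x => hn x θ) f hf hf1

end BoundedLipschitzOfCdf

section UniformAbsoluteContinuity

lemma exists_measure_ball_lt_of_isTightMeasureSet {B : Type*} [PseudoMetricSpace B]
    [MeasurableSpace B] [BorelSpace B] {μ : Measure B} [IsFiniteMeasure μ] [NullSingletonClass μ]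
    (hμ : IsTightMeasureSet {μ}) {δ : ℝ≥0∞} (hδ : 0 < δ) :
    ∃ r > 0, ∀ x, μ (Metric.ball x r) < δ := by
  obtain ⟨δ', hδ'0, hδ'⟩ := exists_between hδ
  obtain ⟨K, hK, hKδ⟩ := isTightMeasureSet_iff_exists_isCompact_measure_compl_le.1 hμ δ' hδ'0
  have hcover : ∀ x, ∃ G : Set B, IsOpen G ∧ x ∈ G ∧ μ G < δ := fun x => by
    obtain ⟨G, hxG, hG, hGδ⟩ := Set.exists_isOpen_lt_of_lt (μ := μ) {x} δ (by
      rwa [measure_singleton (μ := μ)])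
    exact ⟨G, hG, hxG rfl, hGδ⟩
  choose G hGopen hmemG hGδ using hcover
  obtain ⟨r, hr, hlebesgue⟩ := lebesgue_number_lemma_of_metric hK hGopen
    fun x _ => Set.mem_iUnion.2 ⟨x, hmemG x⟩
  refine ⟨r / 2, half_pos hr, fun x => ?_⟩
  by_cases hx : Disjoint (Metric.ball x (r / 2)) K
  · exact (measure_mono hx.subset_compl_right).trans_lt ((hKδ μ rfl).trans_lt hδ')
  · obtain ⟨y, hyx, hyK⟩ := Set.not_disjoint_iff.1 hx
    obtain ⟨z, hz⟩ := hlebesgue y hyK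
    refine (measure_mono (Set.Subset.trans (Metric.ball_subset ?_) hz)).trans_lt (hGδ z)
    linarith [Metric.mem_ball'.1 hyx]

namespace UnifAbsCont

variable {Ω Θ B : Type*} [MeasurableSpace Ω] [MeasurableSpace B] {P : Θ → Measure Ω}

lemma exists_map_le {X : Θ → Ω → B} {μ : Measure B} (hac : UnifAbsCont P X μ)
    (hX : ∀ θ, AEMeasurable (X θ) (P θ)) {ε : ℝ≥0∞} (hε : 0 < ε) :
    ∃ δ > 0, ∀ s, MeasurableSet s → μ s < δ → ∀ θ, (P θ).map (X θ) s ≤ ε := by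
  obtain ⟨ε', -, hε'⟩ := ENNReal.lt_iff_exists_real_btwn.1 hε
  obtain ⟨δ, hδ, hsmall⟩ := hac ε' (ENNReal.ofReal_pos.1 hε'.1)
  refine ⟨ENNReal.ofReal δ, ENNReal.ofReal_pos.2 hδ, fun s hs hμs θ => ?_⟩
  rw [Measure.map_apply_of_aemeasurable (hX θ) hs]
  exact (le_iSup (fun θ => P θ (X θ ⁻¹' s)) θ).trans ((hsmall s hs hμs).trans hε'.2).le

lemma isTightMeasureSet_range_map [TopologicalSpace B] [T2Space B] [OpensMeasurableSpace B]
    {X : Θ → Ω → B} {μ : Measure B} (hac : UnifAbsCont P X μ)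
    (hX : ∀ θ, AEMeasurable (X θ) (P θ)) (hμ : IsTightMeasureSet {μ}) :
    IsTightMeasureSet (Set.range fun θ => (P θ).map (X θ)) := by
  rw [isTightMeasureSet_iff_exists_isCompact_measure_compl_le] at hμ ⊢
  intro ε hε
  obtain ⟨δ, hδ, hsmall⟩ := hac.exists_map_le hX hε
  obtain ⟨δ', hδ'0, hδ'⟩ := exists_between hδ
  obtain ⟨K, hK, hKδ⟩ := hμ δ' hδ'0
  exact ⟨K, hK, Set.forall_mem_range.2 <|
    hsmall Kᶜ hK.measurableSet.compl ((hKδ μ rfl).trans_lt hδ')⟩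

lemma uniformEquicontinuous_cdf_map [∀ θ, IsProbabilityMeasure (P θ)] {X : Θ → Ω → ℝ}
    {μ : Measure ℝ} [IsFiniteMeasure μ] [NullSingletonClass μ] (hac : UnifAbsCont P X μ)
    (hX : ∀ θ, AEMeasurable (X θ) (P θ)) :
    UniformEquicontinuous fun θ => ⇑(cdf ((P θ).map (X θ))) := by
  have := fun θ => Measure.isProbabilityMeasure_map (hX θ)
  refine uniformEquicontinuous_cdf fun ε hε => ?_
  obtain ⟨δ, hδ, hsmall⟩ := hac.exists_map_le hX (ENNReal.ofReal_pos.2 hε)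
  obtain ⟨r, hr, hball⟩ :=
    exists_measure_ball_lt_of_isTightMeasureSet (isTightMeasureSet_singleton (μ := μ)) hδ
  exact ⟨r, hr, fun θ x => ENNReal.toReal_le_of_le_ofReal (le_of_lt hε) <|
    hsmall _ measurableSet_ball (hball x) θ⟩

end UnifAbsCont

end UniformAbsoluteContinuity

lemma toReal_measure_le_eq_cdf_map {Ω : Type*} [MeasurableSpace Ω] {P : Measure Ω}
    [IsProbabilityMeasure P] {U : Ω → ℝ} (hU : AEMeasurable U P) (x : ℝ) :
    (P {ω | U ω ≤ x}).toReal = cdf (P.map U) x := by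
  have := Measure.isProbabilityMeasure_map hU
  rw [cdf_eq_real, measureReal_def, Measure.map_apply_of_aemeasurable hU measurableSet_Iic]
  rfl

theorem tendstoUnifInDist_iff_unif_cdf_general
    {Ω Θ : Type*} [MeasurableSpace Ω] {P : Θ → Measure Ω} [∀ θ, IsProbabilityMeasure (P θ)]
    {X : ℕ → Θ → Ω → ℝ} {Xlim : Θ → Ω → ℝ} (hX : ∀ n θ, AEMeasurable (X n θ) (P θ))
    (hXlim : ∀ θ, AEMeasurable (Xlim θ) (P θ))
    (htight : IsTightMeasureSet (Set.range fun θ => (P θ).map (Xlim θ)))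
    (hcdf : UniformEquicontinuous fun θ => ⇑(cdf ((P θ).map (Xlim θ)))) :
    TendstoUnifInDist P X Xlim ↔
      Tendsto (fun n => ⨆ x : ℝ, ⨆ θ,
          |((P θ) {ω | X n θ ω ≤ x}).toReal - ((P θ) {ω | Xlim θ ω ≤ x}).toReal|)
        atTop (nhds 0) := by
  simp only [toReal_measure_le_eq_cdf_map (hX _ _), toReal_measure_le_eq_cdf_map (hXlim _)]
  rw [tendsto_iSup_iSup_zero_iff (fun _ _ _ => abs_nonneg _) fun _ x _ =>
    abs_cdf_sub_cdf_le_one _ _ x]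
  exact ⟨fun h _ hε => h.eventually_abs_cdf_sub_le hX hXlim hcdf hε,
    tendstoUnifInDist_of_eventually_abs_cdf_sub_le hX hXlim htight⟩

/-- Under uniform absolute continuity of the limits with respect to an atomless probability
measure, uniform convergence in distribution is equivalent to uniform convergence of the
distribution functions, uniformly in the argument. -/
theorem tendstoUnifInDist_iff_unif_cdf
    {Ω Θ : Type*} [MeasurableSpace Ω]
    (P : Θ → Measure Ω) (hP : ∀ θ, IsProbabilityMeasure (P θ))
    (X : ℕ → Θ → Ω → ℝ) (Xlim : Θ → Ω → ℝ)
    (hXmeas : ∀ n θ, Measurable (X n θ)) (hXlimmeas : ∀ θ, Measurable (Xlim θ))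
    (μ : Measure ℝ) (hμ : IsProbabilityMeasure μ) (hμcont : ∀ x : ℝ, μ {x} = 0)
    (hac : UnifAbsCont P Xlim μ) :
    TendstoUnifInDist P X Xlim ↔
      Filter.Tendsto (fun n => ⨆ x : ℝ, ⨆ θ,
          |((P θ) {ω | X n θ ω ≤ x}).toReal - ((P θ) {ω | Xlim θ ω ≤ x}).toReal|)
        Filter.atTop (nhds 0) := by
  have : NullSingletonClass μ := ⟨hμcont⟩
  have hXlim : ∀ θ, AEMeasurable (Xlim θ) (P θ) := fun θ => (hXlimmeas θ).aemeasurable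
  exact tendstoUnifInDist_iff_unif_cdf_general (fun n θ => (hXmeas n θ).aemeasurable) hXlim
    (hac.isTightMeasureSet_range_map hXlim isTightMeasureSet_singleton)
    (hac.uniformEquicontinuous_cdf_map hXlim)
end
end
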